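/- Let K ⊆ ℝⁿ be nonempty, compact, and convex, and F : K → ℝⁿ continuous. Then the variational inequality VI(F,K) has at least one solution. -/

import Mathlib

open RealInnerProductSpace

/-!
A solution of `VI(F, K)` is the same thing as a fixed point of `x ↦ P (x - F x)`, where `P` is the
nearest-point projection onto `K`, so existence follows from Brouwer's theorem.

Brouwer's theorem is proved by the Milnor–Rogers volume argument. Let `f` be a `C¹` map on a compact
convex set `s` fixing the frontier of `s` pointwise, and deform the identity into `f` by
`f_t = id + t (f - id)`. For small `t` the map `f_t` is a bijection of `s` with positive Jacobian,
so `∫ₛ det f_t' = vol s`. The integral is a polynomial in `t`, hence `∫ₛ det f' = vol s > 0`. A `C¹`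
retraction of `s` onto its frontier would have `det f' = 0`, so there is none. A fixed-point-free
`C¹` map would yield such a retraction of a ball, and continuous maps are limits of `C¹` maps.
-/

open MeasureTheory Metric Set Topology Function
open scoped NNReal Polynomial

section Determinant

lemma exists_polynomial_eval_eq_det_add_smul {R M : Type*} [CommRing R] [StrongRankCondition R]
    [AddCommGroup M] [Module R M] [Module.Free R M] [Module.Finite R M] (A B : M →ₗ[R] M) :
    ∃ p : R[X], p.natDegree ≤ Module.finrank R M ∧ ∀ t, p.eval t = LinearMap.det (A + t • B) := by
  let b := Module.Free.chooseBasis R M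
  let toMat := LinearMap.toMatrix b b
  refine ⟨Matrix.det ((Polynomial.X : R[X]) • (toMat B).map Polynomial.C
    + (toMat A).map Polynomial.C), ?_, fun t ↦ ?_⟩
  · rw [Module.finrank_eq_card_chooseBasisIndex]
    exact Polynomial.natDegree_det_X_add_C_le _ _
  · rw [← Polynomial.coe_evalRingHom, RingHom.map_det, ← LinearMap.det_toMatrix b]
    congr 1
    ext i j
    simp [toMat, add_comm, mul_comm t]

variable {E : Type*} [NormedAddCommGroup E] [NormedSpace ℝ E] [FiniteDimensional ℝ E]

lemma det_one_add_pos_of_norm_lt_one {A : E →L[ℝ] E} (hA : ‖A‖ < 1) : 0 < (1 + A).det := by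
  have := FiniteDimensional.complete ℝ E
  have hcont : Continuous fun B : E →L[ℝ] E ↦ (1 + B).det :=
    ContinuousLinearMap.continuous_det.comp (continuous_const.add continuous_id)
  have hne : ∀ B ∈ ball (0 : E →L[ℝ] E) 1, (1 + B).det ≠ 0 := by
    intro B hB
    have hunit : IsUnit (1 + B) := by
      simpa using isUnit_one_sub_of_norm_lt_one (x := -B) (by simpa using hB)
    exact (LinearMap.isUnit_det _ (hunit.map ContinuousLinearMap.toLinearMapRingHom)).ne_zero
  by_contra! hle
  have hone : (1 + (0 : E →L[ℝ] E)).det = 1 := by simp [ContinuousLinearMap.det]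
  obtain ⟨B, hB, hB0⟩ := (convex_ball (0 : E →L[ℝ] E) 1).isPreconnected.intermediate_value
    (mem_ball_zero_iff.2 hA) (mem_ball_self one_pos) hcont.continuousOn
    ⟨hle, hone.symm ▸ zero_le_one⟩
  exact hne B hB hB0

lemma det_eq_zero_of_mapsTo_of_interior_eq_empty {f : E → E} {f' : E →L[ℝ] E} {x : E}
    {s t : Set E} (hf : HasStrictFDerivAt f f' x) (hs : s ∈ 𝓝 x) (hst : MapsTo f s t)
    (ht : interior t = ∅) : f'.det = 0 := by
  have := FiniteDimensional.complete ℝ E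
  by_contra hdet
  have hmap : Filter.map f (𝓝 x) = 𝓝 (f x) :=
    HasStrictFDerivAt.map_nhds_eq_of_equiv (f' := f'.toContinuousLinearEquivOfDetNeZero hdet)
      (by simpa using hf)
  have hmem : t ∈ 𝓝 (f x) := hmap ▸ Filter.mem_map.2 (Filter.mem_of_superset hs hst)
  simpa [ht] using mem_interior_iff_mem_nhds.2 hmem

end Determinant

section LipschitzPerturbation

lemma inter_frontier_nonempty_of_isPreconnected {X : Type*} [TopologicalSpace X] {s t : Set X}
    (ht : IsPreconnected t) (hts : (t ∩ s).Nonempty) (hts' : (t \ s).Nonempty) :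
    (t ∩ frontier s).Nonempty := by
  have := isPreconnected_iff_preconnectedSpace.1 ht
  obtain ⟨x, hxt, hxs⟩ := hts
  obtain ⟨y, hyt, hys⟩ := hts'
  obtain ⟨z, hz⟩ : (frontier (Subtype.val ⁻¹' s : Set t)).Nonempty :=
    nonempty_frontier_iff.2 ⟨⟨⟨x, hxt⟩, hxs⟩, (ne_univ_iff_exists_notMem _).2 ⟨⟨y, hyt⟩, hys⟩⟩
  exact ⟨z, z.2, continuous_subtype_val.frontier_preimage_subset s hz⟩

variable {E : Type*} [NormedAddCommGroup E] [NormedSpace ℝ E]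

lemma lipschitzWith_indicator_of_eqOn_frontier {F : Type*} [NormedAddCommGroup F] {s : Set E}
    {g : E → F} {c : ℝ≥0} (hs : IsClosed s) (hg : LipschitzOnWith c g s)
    (h0 : EqOn g 0 (frontier s)) : LipschitzWith c (s.indicator g) := by
  have hcross : ∀ x ∈ s, ∀ y ∉ s, ‖g x‖ ≤ c * ‖x - y‖ := by
    intro x hx y hy
    obtain ⟨z, hz, hzs⟩ := inter_frontier_nonempty_of_isPreconnected
      (convex_segment (𝕜 := ℝ) x y).isPreconnected
      ⟨x, left_mem_segment ℝ x y, hx⟩ ⟨y, right_mem_segment ℝ x y, hy⟩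
    have hxz : dist x z ≤ dist x y := by
      linarith [dist_add_dist_of_mem_segment hz, dist_nonneg (x := z) (y := y)]
    calc ‖g x‖ = dist (g x) (g z) := by simp [h0 hzs]
      _ ≤ c * dist x z := hg.dist_le_mul x hx z (hs.frontier_subset hzs)
      _ ≤ c * ‖x - y‖ := by rw [← dist_eq_norm]; gcongr
  refine LipschitzWith.of_dist_le_mul fun x y ↦ ?_
  by_cases hx : x ∈ s <;> by_cases hy : y ∈ s
  · simpa [hx, hy] using hg.dist_le_mul x hx y hy
  · simpa [hx, hy, dist_eq_norm] using hcross x hx y hy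
  · simpa [hx, hy, dist_eq_norm, norm_sub_rev] using hcross y hy x hx
  · simp only [hx, hy, not_false_eq_true, indicator_of_notMem, dist_self]
    positivity

lemma bijective_add_of_lipschitzWith {G : Type*} [NormedAddCommGroup G] [CompleteSpace G]
    {g : G → G} {c : ℝ≥0} (hc : c < 1) (hg : LipschitzWith c g) : Bijective fun x ↦ x + g x := by
  refine bijective_iff_existsUnique _ |>.2 fun y ↦ ?_
  have hcontr : ContractingWith c fun x ↦ y - g x :=
    ⟨hc, LipschitzWith.of_dist_le_mul fun a b ↦ by
      simpa only [dist_sub_left] using hg.dist_le_mul a b⟩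
  have hfix : ∀ x, x + g x = y ↔ IsFixedPt (fun x ↦ y - g x) x := fun x ↦ by
    rw [IsFixedPt, sub_eq_iff_eq_add, eq_comm]
  simp only [hfix]
  exact ⟨_, hcontr.fixedPoint_isFixedPt, fun x hx ↦ hcontr.fixedPoint_unique hx⟩

lemma bijOn_add_of_eqOn_frontier [CompleteSpace E] {s : Set E} {g : E → E} {c : ℝ≥0}
    (hs : IsClosed s) (hc : c < 1) (hg : LipschitzOnWith c g s) (h0 : EqOn g 0 (frontier s)) :
    BijOn (fun x ↦ x + g x) s s := by
  let f : E → E := fun x ↦ x + s.indicator g x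
  have hbij : Bijective f :=
    bijective_add_of_lipschitzWith hc (lipschitzWith_indicator_of_eqOn_frontier hs hg h0)
  have hcompl : EqOn f id sᶜ := fun x hx ↦ by simp [f, indicator_of_notMem hx]
  have himage : f '' s = s := by
    rw [← compl_inj_iff, ← image_compl_eq hbij, hcompl.image_eq, image_id]
  have hmem : EqOn f (fun x ↦ x + g x) s := fun x hx ↦ by simp [f, hx]
  exact (himage ▸ hbij.injective.injOn.bijOn_image).congr hmem

end LipschitzPerturbation

section Volume

lemma exists_polynomial_eval_eq_integral {𝕜 α : Type*} [RCLike 𝕜] [MeasurableSpace α]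
    {μ : Measure α} {d : ℕ} {p : α → 𝕜[X]} (hdeg : ∀ x, (p x).natDegree ≤ d)
    (hint : ∀ t, Integrable (fun x ↦ (p x).eval t) μ) :
    ∃ q : 𝕜[X], ∀ t, q.eval t = ∫ x, (p x).eval t ∂μ := by
  let nodes : Finset ℕ := Finset.range (d + 1)
  let basis : ℕ → 𝕜[X] := Lagrange.basis nodes Nat.cast
  have hinterp : ∀ x t, (p x).eval t = ∑ i ∈ nodes, (p x).eval (i : 𝕜) * (basis i).eval t := by
    intro x t
    have hlt : (p x).degree < nodes.card :=
      (p x).degree_le_natDegree.trans_lt <| by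
        rw [Finset.card_range]
        exact_mod_cast Nat.lt_succ_of_le (hdeg x)
    conv_lhs => rw [Lagrange.eq_interpolate (Nat.cast_injective.injOn) hlt]
    simp [Lagrange.interpolate_apply, Polynomial.eval_finsetSum, basis]
  refine ⟨∑ i ∈ nodes, Polynomial.C (∫ x, (p x).eval (i : 𝕜) ∂μ) * basis i, fun t ↦ ?_⟩
  simp only [fun x ↦ hinterp x t, Polynomial.eval_finsetSum, Polynomial.eval_mul, Polynomial.eval_C]
  rw [integral_finsetSum nodes fun i _ ↦ (hint i).mul_const ((basis i).eval t)]
  simp only [integral_mul_const]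

variable {E : Type*} [NormedAddCommGroup E] [NormedSpace ℝ E] [FiniteDimensional ℝ E]
  [MeasurableSpace E] [BorelSpace E] {s : Set E}

lemma exists_polynomial_eval_eq_setIntegral_det_add_smul {μ : Measure E}
    [IsFiniteMeasureOnCompacts μ] {A B : E → E →L[ℝ] E} (hs : IsCompact s)
    (hA : ContinuousOn A s) (hB : ContinuousOn B s) :
    ∃ q : ℝ[X], ∀ t, q.eval t = ∫ x in s, (A x + t • B x).det ∂μ := by
  choose p hdeg heval using fun x ↦
    exists_polynomial_eval_eq_det_add_smul (A x : E →ₗ[ℝ] E) (B x : E →ₗ[ℝ] E)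
  replace heval : ∀ x t, (p x).eval t = (A x + t • B x).det := heval
  have hint : ∀ t, IntegrableOn (fun x ↦ (p x).eval t) s μ := fun t ↦ by
    simp only [heval]
    exact (ContinuousLinearMap.continuous_det.comp_continuousOn
      (hA.add (hB.const_smul t))).integrableOn_compact hs
  simpa only [heval] using exists_polynomial_eval_eq_integral hdeg hint

variable (μ : Measure E) [μ.IsAddHaarMeasure]

lemma setIntegral_det_one_add_of_eqOn_frontier {g : E → E} {g' : E → E →L[ℝ] E} {c : ℝ≥0}
    (hs : Convex ℝ s) (hsc : IsClosed s) (hc : c < 1)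
    (hg : ∀ x ∈ s, HasFDerivWithinAt g (g' x) s x) (hg' : ∀ x ∈ s, ‖g' x‖₊ ≤ c)
    (h0 : EqOn g 0 (frontier s)) : ∫ x in s, (1 + g' x).det ∂μ = μ.real s := by
  have := FiniteDimensional.complete ℝ E
  have hbij : BijOn (fun x ↦ x + g x) s s :=
    bijOn_add_of_eqOn_frontier hsc hc (hs.lipschitzOnWith_of_nnnorm_hasFDerivWithin_le hg hg') h0
  have hpos : ∀ x ∈ s, 0 < (1 + g' x).det := fun x hx ↦
    det_one_add_pos_of_norm_lt_one (NNReal.coe_lt_coe.2 ((hg' x hx).trans_lt hc))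
  calc ∫ x in s, (1 + g' x).det ∂μ = ∫ x in s, |(1 + g' x).det| • (1 : ℝ) ∂μ :=
        setIntegral_congr_fun hsc.measurableSet fun x hx ↦ by simp [abs_of_pos (hpos x hx)]
    _ = ∫ _ in (fun x ↦ x + g x) '' s, (1 : ℝ) ∂μ :=
        (integral_image_eq_integral_abs_det_fderiv_smul μ hsc.measurableSet
          (fun x hx ↦ (hasFDerivWithinAt_id x s).add (hg x hx)) hbij.injOn fun _ ↦ (1 : ℝ)).symm
    _ = μ.real s := by simp [hbij.image_eq]

theorem setIntegral_det_of_eqOn_frontier {f : E → E} {f' : E → E →L[ℝ] E}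
    (hs : Convex ℝ s) (hsc : IsCompact s) (hf : ∀ x ∈ s, HasFDerivWithinAt f (f' x) s x)
    (hf' : ContinuousOn f' s) (hid : EqOn f id (frontier s)) :
    ∫ x in s, (f' x).det ∂μ = μ.real s := by
  let A : E → E →L[ℝ] E := fun x ↦ f' x - 1
  have hA : ContinuousOn A s := hf'.sub continuousOn_const
  obtain ⟨C, hC⟩ : ∃ C : ℝ≥0, ∀ x ∈ s, ‖A x‖₊ ≤ C := by
    obtain ⟨C, hC⟩ := hsc.exists_bound_of_continuousOn hA
    exact ⟨C.toNNReal, fun x hx ↦ NNReal.coe_le_coe.1 ((hC x hx).trans C.le_coe_toNNReal)⟩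
  have hsmall : ∀ t : ℝ, ‖t‖₊ * C < 1 → ∫ x in s, (1 + t • A x).det ∂μ = μ.real s := by
    intro t ht
    refine setIntegral_det_one_add_of_eqOn_frontier μ (g := t • (f - id)) hs hsc.isClosed ht
      (fun x hx ↦ ((hf x hx).sub (hasFDerivWithinAt_id x s)).const_smul t) (fun x hx ↦ ?_)
      (fun x hx ↦ by simp [hid hx])
    rw [nnnorm_smul]
    gcongr
    exact hC x hx
  obtain ⟨q, hq⟩ := exists_polynomial_eval_eq_setIntegral_det_add_smul (μ := μ) hsc
    (continuousOn_const (c := (1 : E →L[ℝ] E))) hA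
  have hqC : q = Polynomial.C (μ.real s) := by
    have hnhds : {t : ℝ | ‖t‖₊ * C < 1} ∈ 𝓝 0 :=
      (isOpen_lt (by fun_prop) continuous_const).mem_nhds (by simp)
    refine q.eq_of_infinite_eval_eq _ ((infinite_of_mem_nhds 0 hnhds).mono fun t ht ↦ ?_)
    simp only [mem_ofPred_eq, hq, Polynomial.eval_C, hsmall t ht]
  calc ∫ x in s, (f' x).det ∂μ = q.eval 1 := by simp [hq, A]
    _ = μ.real s := by simp [hqC]

end Volume

section Brouwer

theorem not_mapsTo_frontier_of_contDiffOn_of_eqOn_frontier {E : Type*} [NormedAddCommGroup E]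
    [NormedSpace ℝ E] [FiniteDimensional ℝ E] {s : Set E} {f : E → E} (hs : Convex ℝ s)
    (hsc : IsCompact s) (hsi : (interior s).Nonempty) (hf : ContDiffOn ℝ 1 f s)
    (hid : EqOn f id (frontier s)) : ¬ MapsTo f s (frontier s) := by
  intro hmaps
  borelize E
  let μ : Measure E := Measure.addHaar
  have hdet : ∀ x ∈ interior s, (fderivWithin ℝ f s x).det = 0 := by
    intro x hx
    have hnhds : s ∈ 𝓝 x := mem_interior_iff_mem_nhds.1 hx
    rw [fderivWithin_of_mem_nhds hnhds]
    exact det_eq_zero_of_mapsTo_of_interior_eq_empty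
      ((hf.contDiffAt hnhds).hasStrictFDerivAt one_ne_zero) hnhds hmaps
      (interior_frontier hsc.isClosed)
  have hvol : μ.real s = 0 :=
    calc μ.real s = ∫ x in s, (fderivWithin ℝ f s x).det ∂μ :=
          (setIntegral_det_of_eqOn_frontier μ hs hsc
            (fun x hx ↦ (hf.differentiableOn one_ne_zero x hx).hasFDerivWithinAt)
            (hf.continuousOn_fderivWithin (uniqueDiffOn_convex hs hsi) le_rfl) hid).symm
      _ = ∫ x in interior s, (fderivWithin ℝ f s x).det ∂μ :=
          (setIntegral_congr_set (interior_ae_eq_of_null_frontier (hs.addHaar_frontier μ))).symm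
      _ = 0 := setIntegral_eq_zero_of_forall_eq_zero hdet
  have hpos : 0 < μ.real s := ENNReal.toReal_pos
    (Measure.measure_pos_of_nonempty_interior μ hsi).ne' hsc.measure_ne_top
  exact hpos.ne' hvol

variable {E : Type*} [NormedAddCommGroup E] [InnerProductSpace ℝ E] [FiniteDimensional ℝ E]

lemma exists_eq_zero_of_contDiffOn_of_eqOn_sphere {u : E → E} {R : ℝ} (hR : 0 < R)
    (hu : ContDiffOn ℝ 1 u (closedBall 0 R)) (hid : EqOn u id (sphere 0 R)) :
    ∃ x ∈ closedBall 0 R, u x = 0 := by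
  by_contra! hne
  have hfr : frontier (closedBall (0 : E) R) = sphere 0 R := frontier_closedBall 0 hR.ne'
  have hnorm : ∀ x ∈ closedBall 0 R, ‖u x‖ ≠ 0 := fun x hx ↦ norm_ne_zero_iff.2 (hne x hx)
  refine not_mapsTo_frontier_of_contDiffOn_of_eqOn_frontier (f := fun x ↦ (R / ‖u x‖) • u x)
    (convex_closedBall 0 R) (isCompact_closedBall 0 R)
    ((nonempty_ball.2 hR).mono ball_subset_interior_closedBall)
    ((contDiffOn_const.div (hu.norm ℝ hne) hnorm).smul hu) ?_ ?_ <;> rw [hfr]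
  · intro x hx
    simp [hid hx, mem_sphere_zero_iff_norm.1 hx, hR.ne']
  · intro x hx
    simp [norm_smul, hnorm x hx, hR.le]

theorem exists_isFixedPt_of_contDiff_of_isBounded_range {f : E → E} (hf : ContDiff ℝ 1 f)
    (hb : Bornology.IsBounded (range f)) : ∃ x, IsFixedPt f x := by
  obtain ⟨M, hM, hfM⟩ := hb.exists_pos_norm_le
  -- The cutoff makes `x - χ x • f x` the identity on an outer sphere; where it vanishes, `χ x = 1`.
  let χ : ContDiffBump (0 : E) := ⟨M, M + 1, hM, lt_add_one M⟩
  obtain ⟨x, -, hx⟩ : ∃ x ∈ closedBall 0 (M + 1), x - χ x • f x = 0 :=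
    exists_eq_zero_of_contDiffOn_of_eqOn_sphere (by positivity)
      (contDiff_id.sub (χ.contDiff.smul hf)).contDiffOn fun x hx ↦ by
        simp [χ.zero_of_le_dist (mem_sphere.1 hx).ge]
  have hxf : x = χ x • f x := sub_eq_zero.1 hx
  have hxM : ‖x‖ ≤ M :=
    calc ‖x‖ = χ x * ‖f x‖ := by
          conv_lhs => rw [hxf, norm_smul, Real.norm_of_nonneg χ.nonneg]
      _ ≤ 1 * M := by
          gcongr
          exacts [χ.le_one, hfM _ (mem_range_self x)]
      _ = M := one_mul M
  have hχ : χ x = 1 := χ.one_of_mem_closedBall (mem_closedBall_zero_iff.2 hxM)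
  exact ⟨x, by rw [IsFixedPt, ← one_smul ℝ (f x), ← hχ, ← hxf]⟩

theorem exists_isFixedPt_of_continuous_of_isBounded_range {f : E → E} (hf : Continuous f)
    (hb : Bornology.IsBounded (range f)) : ∃ x, IsFixedPt f x := by
  obtain ⟨M, hM, hfM⟩ := hb.exists_pos_norm_le
  have happrox : ∀ ε > 0, ε ≤ 1 → ∃ x ∈ closedBall (0 : E) (M + 1), dist x (f x) < ε := by
    intro ε hε hε1
    obtain ⟨g, hg, hgf, -⟩ := hf.exists_contDiff_approx 1 continuous_const fun _ ↦ hε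
    have hgM : ∀ x, ‖g x‖ ≤ M + 1 := fun x ↦ by
      linarith [norm_le_norm_add_norm_sub' (g x) (f x), hfM _ (mem_range_self x),
        dist_eq_norm (g x) (f x) ▸ hgf x]
    obtain ⟨x, hx⟩ := exists_isFixedPt_of_contDiff_of_isBounded_range hg
      (isBounded_iff_forall_norm_le.2 ⟨M + 1, forall_mem_range.2 hgM⟩)
    exact ⟨x, mem_closedBall_zero_iff.2 (hx.eq ▸ hgM x), by simpa [hx.eq] using hgf x⟩
  obtain ⟨x₀, -, hmin⟩ := (isCompact_closedBall (0 : E) (M + 1)).exists_isMinOn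
    (nonempty_closedBall.2 (by positivity)) (f := fun x ↦ dist x (f x)) (by fun_prop)
  refine ⟨x₀, by_contra fun hne ↦ ?_⟩
  have hpos : 0 < dist x₀ (f x₀) := dist_pos.2 (Ne.symm hne)
  obtain ⟨x, hx, hlt⟩ := happrox _ (lt_min hpos one_pos) (min_le_right _ _)
  exact (hlt.trans_le (min_le_left _ _)).not_ge (hmin hx)

end Brouwer

section NearestPoint

variable {E : Type*} [NormedAddCommGroup E] [InnerProductSpace ℝ E]

/-- `P` is a nearest-point projection onto the set `K`, encoded by the variational inequality that
for convex `K` characterizes `P x` as the point of `K` nearest to `x`. -/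
structure IsNearestPointProj (K : Set E) (P : E → E) : Prop where
  mem : ∀ x, P x ∈ K
  inner_le_zero : ∀ x, ∀ y ∈ K, ⟪x - P x, y - P x⟫ ≤ 0

lemma exists_isNearestPointProj {K : Set E} (hne : K.Nonempty) (hcomplete : IsComplete K)
    (hconv : Convex ℝ K) : ∃ P, IsNearestPointProj K P := by
  choose P hmem hmin using exists_norm_eq_iInf_of_complete_convex hne hcomplete hconv
  exact ⟨P, hmem, fun x ↦ (norm_eq_iInf_iff_real_inner_le_zero hconv (hmem x)).1 (hmin x)⟩

namespace IsNearestPointProj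

variable {K : Set E} {P : E → E}

lemma eq_of_inner_le_zero (hP : IsNearestPointProj K P) {x z : E} (hz : z ∈ K)
    (h : ∀ y ∈ K, ⟪x - z, y - z⟫ ≤ 0) : P x = z := by
  have hsum : ⟪P x - z, P x - z⟫ = ⟪x - P x, z - P x⟫ + ⟪x - z, P x - z⟫ := by
    simp only [inner_sub_left, inner_sub_right]
    ring
  have hnonpos : ⟪P x - z, P x - z⟫ ≤ 0 :=
    hsum.trans_le (add_nonpos (hP.inner_le_zero x z hz) (h _ (hP.mem x)))
  exact sub_eq_zero.1 (real_inner_self_nonpos.1 hnonpos)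

lemma apply_of_mem (hP : IsNearestPointProj K P) {x : E} (hx : x ∈ K) : P x = x :=
  hP.eq_of_inner_le_zero hx fun y _ ↦ by simp

lemma lipschitzWith (hP : IsNearestPointProj K P) : LipschitzWith 1 P := by
  refine LipschitzWith.of_dist_le_mul fun x y ↦ ?_
  have hinner : ‖P x - P y‖ * ‖P x - P y‖ ≤ ‖x - y‖ * ‖P x - P y‖ :=
    calc ‖P x - P y‖ * ‖P x - P y‖
        = ⟪x - y, P x - P y⟫ + ⟪x - P x, P y - P x⟫ + ⟪y - P y, P x - P y⟫ := by
          rw [← real_inner_self_eq_norm_mul_norm]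
          simp only [inner_sub_left, inner_sub_right]
          ring
      _ ≤ ⟪x - y, P x - P y⟫ := by
          linarith [hP.inner_le_zero x _ (hP.mem y), hP.inner_le_zero y _ (hP.mem x)]
      _ ≤ ‖x - y‖ * ‖P x - P y‖ := real_inner_le_norm _ _
  rw [NNReal.coe_one, one_mul, dist_eq_norm, dist_eq_norm]
  by_contra! hlt
  exact hinner.not_gt (mul_lt_mul_of_pos_right hlt ((norm_nonneg _).trans_lt hlt))

end IsNearestPointProj

/-- Brouwer's fixed point theorem. -/
theorem exists_isFixedPt_of_isCompact_of_convex [FiniteDimensional ℝ E] {K : Set E} {f : E → E}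
    (hne : K.Nonempty) (hcomp : IsCompact K) (hconv : Convex ℝ K) (hf : ContinuousOn f K)
    (hmaps : MapsTo f K K) : ∃ x ∈ K, IsFixedPt f x := by
  obtain ⟨P, hP⟩ := exists_isNearestPointProj hne hcomp.isComplete hconv
  obtain ⟨x, hx⟩ := exists_isFixedPt_of_continuous_of_isBounded_range
    (hf.comp_continuous hP.lipschitzWith.continuous hP.mem)
    (hcomp.isBounded.subset (range_subset_iff.2 fun x ↦ hmaps (hP.mem x)))
  have hxK : x ∈ K := hx.eq ▸ hmaps (hP.mem x)
  exact ⟨x, hxK, by simpa only [IsFixedPt, comp_apply, hP.apply_of_mem hxK] using hx⟩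

end NearestPoint

section VariationalInequality

variable {E : Type*} [NormedAddCommGroup E] [InnerProductSpace ℝ E]

/-- `x` is a solution of the variational inequality `VI(F, K)`. -/
def IsVISolution (F : E → E) (K : Set E) (x : E) : Prop :=
  x ∈ K ∧ ∀ y ∈ K, 0 ≤ ⟪F x, y - x⟫

lemma IsNearestPointProj.isVISolution_iff_isFixedPt {F P : E → E} {K : Set E} {x : E}
    (hP : IsNearestPointProj K P) : IsVISolution F K x ↔ IsFixedPt (fun z ↦ P (z - F z)) x := by
  have hinner : ∀ y, ⟪x - F x - x, y - x⟫ = -⟪F x, y - x⟫ := fun y ↦ by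
    rw [sub_sub_cancel_left, inner_neg_left]
  constructor
  · rintro ⟨hxK, hx⟩
    exact hP.eq_of_inner_le_zero hxK fun y hy ↦ by simpa [hinner] using hx y hy
  · intro hx
    have hPx : P (x - F x) = x := hx
    refine ⟨hPx ▸ hP.mem _, fun y hy ↦ ?_⟩
    simpa [hPx, hinner] using hP.inner_le_zero (x - F x) y hy

theorem vi_existence_compact_convex_general [FiniteDimensional ℝ E] {F : E → E} {K : Set E}
    (hne : K.Nonempty) (hcomp : IsCompact K) (hconv : Convex ℝ K) (hF : ContinuousOn F K) :
    ∃ x, IsVISolution F K x := by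
  obtain ⟨P, hP⟩ := exists_isNearestPointProj hne hcomp.isComplete hconv
  obtain ⟨x, -, hx⟩ := exists_isFixedPt_of_isCompact_of_convex (f := fun z ↦ P (z - F z))
    hne hcomp hconv (hP.lipschitzWith.continuous.comp_continuousOn (continuousOn_id.sub hF))
    fun z _ ↦ hP.mem _
  exact ⟨x, hP.isVISolution_iff_isFixedPt.2 hx⟩

end VariationalInequality

/-- existence of a VI solution on a nonempty compact convex set for
continuous F (Hartman–Stampacchia / Brouwer). -/
theorem vi_existence_compact_convex
    {n : ℕ} (K : Set (EuclideanSpace ℝ (Fin n)))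
    (hKne : K.Nonempty) (hKcomp : IsCompact K) (hKconv : Convex ℝ K)
    (F : EuclideanSpace ℝ (Fin n) → EuclideanSpace ℝ (Fin n))
    (hF : ContinuousOn F K) :
    ∃ x ∈ K, ∀ y ∈ K, 0 ≤ ⟪F x, y - x⟫ :=
  vi_existence_compact_convex_general hKne hKcomp hKconv hF
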